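/- Let A be an abelian category with enough injectives, let N and B be objects of A, and let n ≥ 1. Let I• be a cochain complex in A concentrated in nonnegative degrees such that every Iˢ is injective, H⁰(I•) ≅ B, and Hˢ(I•) = 0 for all 1 ≤ s ≤ n. Then the abelian group of homotopy classes of cochain maps from the complex consisting of N concentrated in cohomological degree n to I• is naturally isomorphic to Ext^n_A(N, B). -/

import Mathlib

open CategoryTheory Limits

universe w v u

variable {A : Type u} [Category.{v} A] [Abelian A]

/-!
Write `Zˢ` for the cycles of `I•`. A cochain map from `N` in degree `n` to `I•` is a morphism
`N ⟶ Zⁿ`, and it is null-homotopic exactly when this morphism lifts along `Iⁿ⁻¹ ⟶ Zⁿ`. Vanishing of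
cohomology makes `0 ⟶ Zˢ ⟶ Iˢ ⟶ Zˢ⁺¹ ⟶ 0` short exact for `s < n`. Splicing these sequences gives a
Yoneda class in `Extⁿ(Zⁿ, Z⁰)`, along which morphisms `N ⟶ Zⁿ` are pulled back to `Extⁿ(N, Z⁰)`. The
last sequence shows that `Hom(N, Zⁿ) ⟶ Ext¹(N, Zⁿ⁻¹)` is surjective with kernel the morphisms that
lift to `Iⁿ⁻¹`, and dimension shifting along the others is bijective. Finally `Z⁰ ≅ H⁰(I•) ≅ B`.
-/

theorem exists_addEquiv_of_eq_zero_iff {G H K : Type*} [AddGroup G] [AddGroup H] [AddGroup K]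
    {p : G →+ H} {q : G →+ K} (hp : Function.Surjective p) (hq : Function.Surjective q)
    (hpq : ∀ g, p g = 0 ↔ q g = 0) : ∃ e : H ≃+ K, ∀ g, e (p g) = q g := by
  have hker : p.ker = q.ker := AddSubgroup.ext hpq
  refine ⟨(QuotientAddGroup.liftEquiv p.ker hp rfl).symm.trans
    (QuotientAddGroup.liftEquiv p.ker hq hker), fun g => ?_⟩
  rw [← QuotientAddGroup.liftEquiv_coe p.ker hp rfl g, AddEquiv.trans_apply,
    AddEquiv.symm_apply_apply, QuotientAddGroup.liftEquiv_coe]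

section HomFromSingle

variable {ι : Type*} [DecidableEq ι] {c : ComplexShape ι}

/-- Morphisms from `N` concentrated in degree `j` to a complex `K` are morphisms from `N` to the
cycles of `K` in degree `j`. -/
noncomputable def homFromSingleAddEquiv (N : A) (K : HomologicalComplex A c) (j : ι) :
    ((HomologicalComplex.single A c j).obj N ⟶ K) ≃+ (N ⟶ K.cycles j) where
  toFun f := K.liftCycles ((HomologicalComplex.singleObjXSelf c j N).inv ≫ f.f j) _ rfl (by simp)
  invFun g := HomologicalComplex.mkHomFromSingle (g ≫ K.iCycles j) (by simp)
  left_inv f := HomologicalComplex.from_single_hom_ext (by simp)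
  right_inv g := by simp [← cancel_mono (K.iCycles j)]
  map_add' f g := by simp [← cancel_mono (K.iCycles j)]

variable {N : A} {K : HomologicalComplex A c} {j : ι}

@[simp]
theorem homFromSingleAddEquiv_comp_iCycles (f : (HomologicalComplex.single A c j).obj N ⟶ K) :
    homFromSingleAddEquiv N K j f ≫ K.iCycles j =
      (HomologicalComplex.singleObjXSelf c j N).inv ≫ f.f j := by
  simp [homFromSingleAddEquiv]

theorem nonempty_homotopy_zero_of_comp_d_eq {f : (HomologicalComplex.single A c j).obj N ⟶ K}
    {h : N ⟶ K.X (c.prev j)}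
    (hf : h ≫ K.d (c.prev j) j = (HomologicalComplex.singleObjXSelf c j N).inv ≫ f.f j) :
    Nonempty (Homotopy f 0) := by
  let H (i k : ι) (hki : c.Rel k i) :
      ((HomologicalComplex.single A c j).obj N).X i ⟶ K.X k :=
    if hi : i = j then
      (HomologicalComplex.singleObjXIsoOfEq c j N i hi).hom ≫ h ≫
        (K.XIsoOfEq (c.prev_eq' (hi ▸ hki))).hom
    else 0
  suffices f = Homotopy.nullHomotopicMap' H from this ▸ ⟨Homotopy.nullHomotopy' H⟩
  apply HomologicalComplex.from_single_hom_ext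
  rw [← cancel_epi (HomologicalComplex.singleObjXSelf c j N).inv, ← hf]
  by_cases hj : c.Rel (c.prev j) j
  · simp [Homotopy.nullHomotopicMap', Homotopy.nullHomotopicMap, dNext, prevD, hj, H,
      HomologicalComplex.singleObjXSelf]
  · simp [Homotopy.nullHomotopicMap', Homotopy.nullHomotopicMap, dNext, prevD, K.shape _ _ hj]

/-- If `j` has no predecessor, then `c.prev j = j` and `K.toCycles j j = 0`, so the right-hand side
says that `f = 0`. -/
theorem nonempty_homotopy_zero_iff_exists_comp_toCycles
    (f : (HomologicalComplex.single A c j).obj N ⟶ K) :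
    Nonempty (Homotopy f 0) ↔
      ∃ h : N ⟶ K.X (c.prev j), h ≫ K.toCycles (c.prev j) j = homFromSingleAddEquiv N K j f := by
  simp only [← cancel_mono (K.iCycles j), Category.assoc, HomologicalComplex.toCycles_i,
    homFromSingleAddEquiv_comp_iCycles]
  refine ⟨?_, fun ⟨_, hf⟩ => nonempty_homotopy_zero_of_comp_d_eq hf⟩
  rintro ⟨H⟩
  refine ⟨(HomologicalComplex.singleObjXSelf c j N).inv ≫ H.hom j (c.prev j), ?_⟩
  simp [H.comm j, dNext, prevD]

end HomFromSingle

section CyclesShortComplex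

variable {ι : Type*} {c : ComplexShape ι} (K : HomologicalComplex A c) {i j : ι}

/-- The short complex `Zⁱ ⟶ Kⁱ ⟶ Zʲ` formed by the cycles of `K` in degrees `i` and `j`. -/
noncomputable def cyclesShortComplex (i j : ι) : ShortComplex A where
  f := K.iCycles i
  g := K.toCycles i j
  zero := by simp [← cancel_mono (K.iCycles j)]

theorem cyclesShortComplex_exact (hij : c.Rel i j) : (cyclesShortComplex K i j).Exact :=
  ShortComplex.exact_of_f_is_kernel _
    (isKernelOfComp _ _ (K.cyclesIsKernel i j (c.next_eq' hij)) _ (K.toCycles_i i j))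

theorem epi_toCycles_of_isZero_homology (hij : c.Rel i j) (hj : IsZero (K.homology j)) :
    Epi (K.toCycles i j) :=
  Preadditive.epi_of_isZero_cokernel' _ (K.homologyIsCokernel i j (c.prev_eq' hij)) hj

theorem cyclesShortComplex_shortExact (hij : c.Rel i j) (hj : IsZero (K.homology j)) :
    (cyclesShortComplex K i j).ShortExact where
  exact := cyclesShortComplex_exact K hij
  mono_f := inferInstanceAs (Mono (K.iCycles i))
  epi_g := epi_toCycles_of_isZero_homology K hij hj

end CyclesShortComplex

section DimensionShifting

open Abelian

variable [HasExt.{w} A] {S : ShortComplex A} (hS : S.ShortExact)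

theorem mk₀_comp_extClass_eq_zero_iff {N : A} (f : N ⟶ S.X₃) :
    (Ext.mk₀ f).comp hS.extClass (zero_add 1) = 0 ↔ ∃ h : N ⟶ S.X₂, h ≫ S.g = f := by
  constructor
  · intro hf
    obtain ⟨y, hy⟩ := Ext.covariant_sequence_exact₃ N hS (Ext.mk₀ f) (zero_add 1) hf
    obtain ⟨h, rfl⟩ := (Ext.mk₀_bijective N S.X₂).surjective y
    exact ⟨h, (Ext.mk₀_bijective N S.X₃).injective (by rw [← hy, Ext.mk₀_comp_mk₀])⟩
  · rintro ⟨h, rfl⟩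
    rw [← Ext.mk₀_comp_mk₀_assoc, hS.comp_extClass, Ext.comp_zero]

variable [Injective S.X₂]

theorem postcomp_extClass_surjective (N : A) (k : ℕ) :
    Function.Surjective (hS.extClass.postcomp N (rfl : k + 1 = k + 1)) :=
  fun x => Ext.covariant_sequence_exact₁ N hS x (Ext.eq_zero_of_injective _) rfl

theorem postcomp_extClass_bijective (N : A) (k : ℕ) :
    Function.Bijective (hS.extClass.postcomp N (rfl : k + 1 + 1 = k + 1 + 1)) := by
  refine ⟨(injective_iff_map_eq_zero _).2 fun x hx => ?_, postcomp_extClass_surjective hS N (k + 1)⟩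
  obtain ⟨y, rfl⟩ := Ext.covariant_sequence_exact₃ N hS x rfl hx
  rw [Ext.eq_zero_of_injective y, Ext.zero_comp]

end DimensionShifting

section CyclesExtClass

open Abelian

variable [HasExt.{w} A] (I : CochainComplex A ℕ)

/-- The Yoneda class in `Extⁿ(Zⁿ, Z⁰)` of the exact sequence
`0 ⟶ Z⁰ ⟶ I⁰ ⟶ ⋯ ⟶ Iⁿ⁻¹ ⟶ Zⁿ ⟶ 0`, where `Zˢ` denotes the cycles of `I` in degree `s`. -/
noncomputable def cyclesExtClass :
    (n : ℕ) → (∀ s < n, IsZero (I.homology (s + 1))) → Ext.{w} (I.cycles n) (I.cycles 0) n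
  | 0, _ => Ext.mk₀ (𝟙 _)
  | n + 1, hI =>
    (cyclesShortComplex_shortExact I (i := n) rfl (hI n n.lt_succ_self)).extClass.comp
      (cyclesExtClass n fun s hs => hI s (hs.trans n.lt_succ_self)) (add_comm 1 n)

variable {I} {n : ℕ}

theorem comp_cyclesExtClass_succ {N : A} {k l m : ℕ}
    (hI : ∀ s < n + 1, IsZero (I.homology (s + 1))) (x : Ext.{w} N (I.cycles (n + 1)) k)
    (hl : k + 1 = l) (hm : k + (n + 1) = m) :
    x.comp (cyclesExtClass I (n + 1) hI) hm =
      (x.comp (cyclesShortComplex_shortExact I rfl (hI n n.lt_succ_self)).extClass hl).comp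
        (cyclesExtClass I n fun s hs => hI s (hs.trans n.lt_succ_self)) (by lia) :=
  (Ext.comp_assoc _ _ _ _ _ (by lia)).symm

theorem postcomp_cyclesExtClass_bijective (N : A) (hinj : ∀ s < n, Injective (I.X s))
    (hI : ∀ s < n, IsZero (I.homology (s + 1))) {k l : ℕ} (hl : k + 1 + n = l) :
    Function.Bijective ((cyclesExtClass.{w} I n hI).postcomp N hl) := by
  induction n generalizing k with
  | zero =>
    subst hl
    have hid : ⇑((cyclesExtClass I 0 hI).postcomp N (add_zero (k + 1))) = id :=
      funext Ext.comp_mk₀_id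
    exact hid ▸ Function.bijective_id
  | succ n ih =>
    have : Injective (cyclesShortComplex I n (n + 1)).X₂ := hinj n n.lt_succ_self
    have hS := cyclesShortComplex_shortExact I (i := n) rfl (hI n n.lt_succ_self)
    have hI' (s : ℕ) (hs : s < n) := hI s (hs.trans n.lt_succ_self)
    have hl' : k + 1 + 1 + n = l := by lia
    have hcomp : ⇑((cyclesExtClass I (n + 1) hI).postcomp N hl) =
        (cyclesExtClass I n hI').postcomp N hl' ∘ hS.extClass.postcomp N rfl :=
      funext fun x => comp_cyclesExtClass_succ hI x rfl hl
    rw [hcomp]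
    exact (ih (fun s hs => hinj s (hs.trans n.lt_succ_self)) hI' hl').comp
      (postcomp_extClass_bijective hS N k)

theorem exists_mk₀_comp_cyclesExtClass_eq {N : A} (hinj : ∀ s < n, Injective (I.X s))
    (hI : ∀ s < n, IsZero (I.homology (s + 1))) (x : Ext.{w} N (I.cycles 0) n) :
    ∃ f : N ⟶ I.cycles n, (Ext.mk₀ f).comp (cyclesExtClass I n hI) (zero_add n) = x := by
  cases n with
  | zero =>
    obtain ⟨f, rfl⟩ := (Ext.mk₀_bijective _ _).surjective x
    exact ⟨f, Ext.comp_mk₀_id _⟩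
  | succ n =>
    have : Injective (cyclesShortComplex I n (n + 1)).X₂ := hinj n n.lt_succ_self
    have hS := cyclesShortComplex_shortExact I (i := n) rfl (hI n n.lt_succ_self)
    obtain ⟨y, rfl⟩ := (postcomp_cyclesExtClass_bijective N
      (fun s hs => hinj s (hs.trans n.lt_succ_self))
      (fun s hs => hI s (hs.trans n.lt_succ_self)) (by lia : 0 + 1 + n = n + 1)).surjective x
    obtain ⟨z, rfl⟩ := postcomp_extClass_surjective hS N 0 y
    obtain ⟨f, rfl⟩ := (Ext.mk₀_bijective _ _).surjective z
    exact ⟨f, comp_cyclesExtClass_succ hI (Ext.mk₀ f) (zero_add 1) _⟩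

theorem mk₀_comp_cyclesExtClass_eq_zero_iff {N : A} (hinj : ∀ s < n, Injective (I.X s))
    (hI : ∀ s < n, IsZero (I.homology (s + 1))) (f : N ⟶ I.cycles n) :
    (Ext.mk₀ f).comp (cyclesExtClass.{w} I n hI) (zero_add n) = 0 ↔
      ∃ h : N ⟶ I.X ((ComplexShape.up ℕ).prev n), h ≫ I.toCycles _ n = f := by
  cases n with
  | zero => simp [cyclesExtClass, Ext.mk₀_eq_zero_iff, I.toCycles_eq_zero, eq_comm (a := f)]
  | succ n =>
    have hS := cyclesShortComplex_shortExact I (i := n) rfl (hI n n.lt_succ_self)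
    have hbij := postcomp_cyclesExtClass_bijective.{w} N
      (fun s hs => hinj s (hs.trans n.lt_succ_self))
      (fun s hs => hI s (hs.trans n.lt_succ_self)) (by lia : 0 + 1 + n = n + 1)
    rw [comp_cyclesExtClass_succ hI _ (zero_add 1), CochainComplex.prev_nat_succ]
    exact (map_eq_zero_iff _ hbij.injective).trans (mk₀_comp_extClass_eq_zero_iff hS f)

end CyclesExtClass

section HomotopyClasses

open Abelian

theorem postcomp_mk₀_bijective_of_iso [HasExt.{w} A] {B C : A} (e : B ≅ C) (N : A) (n : ℕ) :
    Function.Bijective ((Ext.mk₀ e.hom).postcomp N (add_zero n) : Ext.{w} N B n →+ Ext N C n) :=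
  ((extFunctorObj N n).mapIso e).addCommGroupIsoToAddEquiv.bijective

/-- The isomorphisms for varying `N` are all given by pulling back one class `γ`, and are therefore
natural in `N`. -/
theorem homotopyClasses_addEquiv_ext_general [HasExt.{w} A]
    (B : A) (n : ℕ) (I : CochainComplex A ℕ)
    (hinj : ∀ s < n, Injective (I.X s))
    (e0 : I.homology 0 ≅ B)
    (hvan : ∀ s < n, IsZero (I.homology (s + 1))) :
    ∃ γ : Ext.{w} (I.cycles n) B n, ∀ N : A,
      ∃ e : ((HomotopyCategory.quotient A (ComplexShape.up ℕ)).obj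
            ((HomologicalComplex.single A (ComplexShape.up ℕ) n).obj N) ⟶
          (HomotopyCategory.quotient A (ComplexShape.up ℕ)).obj I) ≃+ Ext N B n,
        ∀ f, e ((HomotopyCategory.quotient A (ComplexShape.up ℕ)).map f) =
          (Ext.mk₀ (homFromSingleAddEquiv N I n f)).comp γ (zero_add n) := by
  let α := cyclesExtClass I n hvan
  let β := Ext.mk₀ (I.isoHomologyπ₀ ≪≫ e0).hom
  refine ⟨α.comp β (add_zero n), fun N => ?_⟩
  let Q := HomotopyCategory.quotient A (ComplexShape.up ℕ)
  let ψ : ((HomologicalComplex.single A (ComplexShape.up ℕ) n).obj N ⟶ I) →+ Ext N B n :=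
    ((α.comp β (add_zero n)).postcomp N (zero_add n)).comp
      ((homFromSingleAddEquiv N I n).trans Ext.addEquiv₀.symm).toAddMonoidHom
  have hβ := postcomp_mk₀_bijective_of_iso (I.isoHomologyπ₀ ≪≫ e0) N n
  have hψ (f) : ψ f = β.postcomp N (add_zero n)
      ((Ext.mk₀ (homFromSingleAddEquiv N I n f)).comp α (zero_add n)) :=
    (Ext.comp_assoc_of_third_deg_zero _ _ _ _).symm
  refine exists_addEquiv_of_eq_zero_iff (p := Q.mapAddHom) (q := ψ) Q.map_surjective ?_ ?_
  · intro x
    obtain ⟨y, rfl⟩ := hβ.surjective x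
    obtain ⟨g, rfl⟩ := exists_mk₀_comp_cyclesExtClass_eq hinj hvan y
    obtain ⟨f, rfl⟩ := (homFromSingleAddEquiv N I n).surjective g
    exact ⟨f, hψ f⟩
  · intro f
    rw [hψ, map_eq_zero_iff _ hβ.injective, mk₀_comp_cyclesExtClass_eq_zero_iff hinj,
      ← nonempty_homotopy_zero_iff_exists_comp_toCycles]
    exact HomotopyCategory.quotient_map_eq_zero_iff f

end HomotopyClasses

/-- Let `A` be an abelian category with enough injectives, `N`, `B` objects of `A` and
`n ≥ 1`. If `I•` is a nonnegatively graded cochain complex of injective objects with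
`H⁰(I•) ≅ B` and `Hˢ(I•) = 0` for `1 ≤ s ≤ n`, then the abelian group of homotopy classes
of cochain maps from the complex `N` concentrated in degree `n` to `I•` (i.e. the group of
morphisms in the homotopy category) is isomorphic to `Ext^n_A(N, B)`. -/
theorem homotopyClasses_addEquiv_ext
    [EnoughInjectives A] [CategoryTheory.HasExt.{w} A]
    (N B : A) (n : ℕ) (hn : 1 ≤ n)
    (I : CochainComplex A ℕ)
    (hinj : ∀ s : ℕ, Injective (I.X s))
    (e0 : I.homology 0 ≅ B)
    (hvan : ∀ s : ℕ, 1 ≤ s → s ≤ n → IsZero (I.homology s)) :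
    Nonempty
      ((((HomotopyCategory.quotient A (ComplexShape.up ℕ)).obj
            ((HomologicalComplex.single A (ComplexShape.up ℕ) n).obj N)) ⟶
          ((HomotopyCategory.quotient A (ComplexShape.up ℕ)).obj I)) ≃+
        Abelian.Ext N B n) := by
  obtain ⟨_, hγ⟩ := homotopyClasses_addEquiv_ext_general B n I (fun s _ => hinj s) e0
    fun s hs => hvan (s + 1) s.succ_pos hs
  exact ⟨(hγ N).choose⟩
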